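/- For every two-user discrete memoryless interference channel with degraded message sets (transmitter 1 informed) that has type B weak interference, i.e. I(U,X₂;Y₂) ≤ I(U,X₂;Y₁) holds for every finite-valued random variable U such that U → (X₁,X₂) → (Y₁,Y₂) is a Markov chain, the region ℛ_* is achievable: ℛ_* ⊆ C^{T₁}_{IFC}, where ℛ_* is the set of all rate pairs (R₁,R₂) such that R₁ ≤ I(X₁;Y₁|U,X₂) and R₂ ≤ I(U,X₂;Y₂) for some finite-valued auxiliary random variable U with joint distribution factoring as p(u,x₂)·p(x₁|u)·P(y₁,y₂|x₁,x₂). -/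

import Mathlib

open scoped BigOperators

noncomputable section

/-- Shannon entropy (base 2) of a finitely supported probability vector. -/
def ent {A : Type*} [Fintype A] (p : A → ℝ) : ℝ :=
  -∑ a, p a * Real.logb 2 (p a)

/-- The distribution (pushforward) of a random variable `f` on a finite
probability space with probability mass function `μ`. -/
def lawOf {Ω A : Type*} [Fintype Ω] [DecidableEq A] (μ : Ω → ℝ) (f : Ω → A) : A → ℝ :=
  fun a => ∑ ω, if f ω = a then μ ω else 0

/-- Shannon entropy (base 2) of a random variable `f` on a finite probability space. -/
def entRV {Ω A : Type*} [Fintype Ω] [Fintype A] [DecidableEq A] (μ : Ω → ℝ) (f : Ω → A) : ℝ :=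
  ent (lawOf μ f)

/-- Mutual information `I(f; g)` (base 2) on a finite probability space. -/
def miRV {Ω A B : Type*} [Fintype Ω] [Fintype A] [Fintype B] [DecidableEq A] [DecidableEq B]
    (μ : Ω → ℝ) (f : Ω → A) (g : Ω → B) : ℝ :=
  entRV μ f + entRV μ g - entRV μ (fun ω => (f ω, g ω))

/-- Conditional mutual information `I(f; g | h)` (base 2) on a finite probability space. -/
def cmiRV {Ω A B C : Type*} [Fintype Ω] [Fintype A] [Fintype B] [Fintype C]
    [DecidableEq A] [DecidableEq B] [DecidableEq C]
    (μ : Ω → ℝ) (f : Ω → A) (g : Ω → B) (h : Ω → C) : ℝ :=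
  entRV μ (fun ω => (f ω, h ω)) + entRV μ (fun ω => (g ω, h ω))
    - entRV μ (fun ω => (f ω, g ω, h ω)) - entRV μ h

/-- A two-user discrete memoryless interference channel with finite input alphabets
`X1`, `X2` and finite output alphabets `Y1`, `Y2`. -/
structure DMIFC (X1 X2 Y1 Y2 : Type) [Fintype X1] [Fintype X2] [Fintype Y1] [Fintype Y2] where
  W : X1 → X2 → Y1 → Y2 → ℝ
  nonneg : ∀ x1 x2 y1 y2, 0 ≤ W x1 x2 y1 y2
  sum_one : ∀ x1 x2, ∑ y1, ∑ y2, W x1 x2 y1 y2 = 1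

variable {X1 X2 Y1 Y2 : Type} [Fintype X1] [Fintype X2] [Fintype Y1] [Fintype Y2]
  [DecidableEq X1] [DecidableEq X2] [DecidableEq Y1] [DecidableEq Y2]

/-- Average probability that receiver 1 decodes its message incorrectly, for a given
code for the IFC with degraded message sets (transmitter 1 knows both messages),
with the messages uniform and independent and the channel used `n` times without feedback. -/
def pe1 (ch : DMIFC X1 X2 Y1 Y2) (n M1 M2 : ℕ)
    (f1 : Fin M1 → Fin M2 → Fin n → X1) (f2 : Fin M2 → Fin n → X2)
    (g1 : (Fin n → Y1) → Fin M1) : ℝ :=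
  (1 / (M1 * M2) : ℝ) * ∑ w1 : Fin M1, ∑ w2 : Fin M2, ∑ y1 : Fin n → Y1, ∑ y2 : Fin n → Y2,
    (∏ i, ch.W (f1 w1 w2 i) (f2 w2 i) (y1 i) (y2 i)) * (if g1 y1 = w1 then 0 else 1)

/-- Average probability that receiver 2 decodes its message incorrectly. -/
def pe2 (ch : DMIFC X1 X2 Y1 Y2) (n M1 M2 : ℕ)
    (f1 : Fin M1 → Fin M2 → Fin n → X1) (f2 : Fin M2 → Fin n → X2)
    (g2 : (Fin n → Y2) → Fin M2) : ℝ :=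
  (1 / (M1 * M2) : ℝ) * ∑ w1 : Fin M1, ∑ w2 : Fin M2, ∑ y1 : Fin n → Y1, ∑ y2 : Fin n → Y2,
    (∏ i, ch.W (f1 w1 w2 i) (f2 w2 i) (y1 i) (y2 i)) * (if g2 y2 = w2 then 0 else 1)

/-- A rate pair `(R1, R2)` is achievable for the IFC with degraded message sets
(transmitter 1 informed) if there are codes of arbitrarily small error probability
whose rates are arbitrarily close to `(R1, R2)`. -/
def AchievableT1 (ch : DMIFC X1 X2 Y1 Y2) (R1 R2 : ℝ) : Prop :=
  ∀ ε : ℝ, 0 < ε → ∃ (n M1 M2 : ℕ) (f1 : Fin M1 → Fin M2 → Fin n → X1)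
    (f2 : Fin M2 → Fin n → X2) (g1 : (Fin n → Y1) → Fin M1) (g2 : (Fin n → Y2) → Fin M2),
    0 < n ∧ 0 < M1 ∧ 0 < M2 ∧
    R1 - ε ≤ Real.logb 2 M1 / n ∧ R2 - ε ≤ Real.logb 2 M2 / n ∧
    pe1 ch n M1 M2 f1 f2 g1 ≤ ε ∧ pe2 ch n M1 M2 f1 f2 g2 ≤ ε

/-- The capacity region `C^{T₁}_{IFC}` of the IFC with degraded message sets
(transmitter 1 knows both messages): the closure of the set of achievable rate pairs. -/
def CapacityT1 (ch : DMIFC X1 X2 Y1 Y2) : Set (ℝ × ℝ) :=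
  closure {R : ℝ × ℝ | AchievableT1 ch R.1 R.2}

/-- The joint distribution on `(U, X₁, X₂, Y₁, Y₂)` obtained from an arbitrary joint
distribution `q` on `(U, X₁, X₂)` by passing `(X₁, X₂)` through the channel; this is
exactly the condition that `U → (X₁,X₂) → (Y₁,Y₂)` is a Markov chain. -/
def jointMarkov (ch : DMIFC X1 X2 Y1 Y2) (nU : ℕ) (q : Fin nU × X1 × X2 → ℝ) :
    Fin nU × X1 × X2 × Y1 × Y2 → ℝ :=
  fun p => q (p.1, p.2.1, p.2.2.1) * ch.W p.2.1 p.2.2.1 p.2.2.2.1 p.2.2.2.2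

/-- Type B weak interference: `I(U, X₂; Y₂) ≤ I(U, X₂; Y₁)` for every finite-valued
random variable `U` such that `U → (X₁,X₂) → (Y₁,Y₂)` is a Markov chain. -/
def TypeB (ch : DMIFC X1 X2 Y1 Y2) : Prop :=
  ∀ (nU : ℕ) (q : Fin nU × X1 × X2 → ℝ),
    (∀ p, 0 ≤ q p) → (∑ p, q p = 1) →
    miRV (jointMarkov ch nU q) (fun p => (p.1, p.2.2.1)) (fun p => p.2.2.2.2)
      ≤ miRV (jointMarkov ch nU q) (fun p => (p.1, p.2.2.1)) (fun p => p.2.2.2.1)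

/-- The joint distribution on `(U, X₁, X₂, Y₁, Y₂)` factoring as
`p(u,x₂) p(x₁|u) P(y₁,y₂|x₁,x₂)`. -/
def jointStar (ch : DMIFC X1 X2 Y1 Y2) (nU : ℕ)
    (pUX2 : Fin nU → X2 → ℝ) (pX1 : Fin nU → X1 → ℝ) :
    Fin nU × X1 × X2 × Y1 × Y2 → ℝ :=
  fun p => pUX2 p.1 p.2.2.1 * pX1 p.1 p.2.1 * ch.W p.2.1 p.2.2.1 p.2.2.2.1 p.2.2.2.2

/-- The region `ℛ_*`: all rate pairs `(R₁, R₂)` with `R₁ ≤ I(X₁; Y₁ | U, X₂)` and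
`R₂ ≤ I(U, X₂; Y₂)` for some finite-valued auxiliary random variable `U` whose joint
distribution with the inputs and outputs factors as `p(u,x₂) p(x₁|u) P(y₁,y₂|x₁,x₂)`. -/
def Rstar (ch : DMIFC X1 X2 Y1 Y2) : Set (ℝ × ℝ) :=
  {R | ∃ (nU : ℕ) (pUX2 : Fin nU → X2 → ℝ) (pX1 : Fin nU → X1 → ℝ),
    (∀ u x2, 0 ≤ pUX2 u x2) ∧ (∑ u, ∑ x2, pUX2 u x2) = 1 ∧
    (∀ u x1, 0 ≤ pX1 u x1) ∧ (∀ u, ∑ x1, pX1 u x1 = 1) ∧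
    R.1 ≤ cmiRV (jointStar ch nU pUX2 pX1)
            (fun p => p.2.1) (fun p => p.2.2.2.1) (fun p => (p.1, p.2.2.1)) ∧
    R.2 ≤ miRV (jointStar ch nU pUX2 pX1)
            (fun p => (p.1, p.2.2.1)) (fun p => p.2.2.2.2)}

/-!
Superposition coding: a random cloud center in `U × X₂` for every message of transmitter 2, and
around it a random satellite in `X₁` for every message of transmitter 1, which knows both messages.
Receiver 2 decodes the cloud center, receiver 1 the center and the satellite. Decoding uses
Stein tests for the joint law against the law a wrong codeword would have: `P(U, X₂) × P(Y₁)` and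
`P(U, X₂) × P(Y₂)` for a wrong center, and the conditionally independent version of
`(X₁, Y₁)` given `(U, X₂)` for a wrong satellite. A wrong codeword passes a test with probability
about `2 ^ (-n I)`, where `I` is the corresponding relative entropy, that is, the mutual
information, so rates below these informations suffice. Receiver 1 needs `R₂ ≤ I(U, X₂; Y₁)` to
decode the center, and this is what type B weak interference provides.
-/

section FiniteProbability

section Events

lemma indicator_one_nonneg {α : Type*} (S : Set α) (a : α) : 0 ≤ S.indicator (1 : α → ℝ) a :=
  Set.indicator_nonneg (fun _ _ => zero_le_one) a

variable {Ω : Type*} [Fintype Ω] {μ : Ω → ℝ}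

/-- The mass that a (possibly unnormalized) finite distribution `μ` gives to an event. -/
def prob (μ : Ω → ℝ) (S : Set Ω) : ℝ :=
  ∑ ω, S.indicator μ ω

lemma sum_mul_indicator_one (μ : Ω → ℝ) (S : Set Ω) :
    ∑ ω, μ ω * S.indicator 1 ω = prob μ S := by
  classical
  simp [prob, Set.indicator_apply]

lemma prob_nonneg (hμ : 0 ≤ μ) (S : Set Ω) : 0 ≤ prob μ S :=
  Finset.sum_nonneg fun ω _ => Set.indicator_nonneg (fun ω _ => hμ ω) ω

lemma prob_le_sum_mul (hμ : 0 ≤ μ) {S : Set Ω} {F : Ω → ℝ} (hF : 0 ≤ F)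
    (hS : ∀ ω ∈ S, 0 < μ ω → 1 ≤ F ω) : prob μ S ≤ ∑ ω, μ ω * F ω := by
  refine Finset.sum_le_sum fun ω _ => Set.indicator_apply_le' (fun hω => ?_)
    fun _ => mul_nonneg (hμ ω) (hF ω)
  rcases (hμ ω).eq_or_lt with h | h
  · simp [← h]
  · exact le_mul_of_one_le_right h.le (hS ω hω h)

lemma prob_mono (hμ : 0 ≤ μ) {S T : Set Ω} (h : ∀ ω ∈ S, 0 < μ ω → ω ∈ T) :
    prob μ S ≤ prob μ T := by
  rw [← sum_mul_indicator_one μ T]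
  refine prob_le_sum_mul hμ (indicator_one_nonneg T) ?_
  exact fun ω hω hpos => (Set.indicator_of_mem (h ω hω hpos) (1 : Ω → ℝ)).ge

lemma prob_setOf_mul_le_le_inv (hμ : μ ∈ stdSimplex ℝ Ω) (ν : Ω → ℝ) {c : ℝ} (hc : 0 < c) :
    prob ν {ω | c * ν ω ≤ μ ω} ≤ c⁻¹ := by
  calc prob ν {ω | c * ν ω ≤ μ ω} ≤ ∑ ω, c⁻¹ * μ ω := by
        refine Finset.sum_le_sum fun ω _ => Set.indicator_apply_le' (fun hω => ?_)
          fun _ => mul_nonneg (inv_nonneg.2 hc.le) (hμ.1 ω)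
        rwa [inv_mul_eq_div, le_div_iff₀' hc]
    _ = c⁻¹ := by rw [← Finset.mul_sum, hμ.2, mul_one]

lemma prob_comp_equiv {Ω' : Type*} [Fintype Ω'] (e : Ω' ≃ Ω) (μ : Ω → ℝ) (S : Set Ω) :
    prob (μ ∘ e) (e ⁻¹' S) = prob μ S := by
  simp only [prob, Set.indicator_comp_right]
  exact Equiv.sum_comp e (S.indicator μ)

lemma exists_le_of_sum_mul_le (hμ : μ ∈ stdSimplex ℝ Ω) {F : Ω → ℝ} {b : ℝ}
    (h : ∑ ω, μ ω * F ω ≤ b) : ∃ ω, F ω ≤ b := by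
  by_contra! hF
  obtain ⟨ω, -, hω⟩ := Finset.exists_ne_zero_of_sum_ne_zero (hμ.2 ▸ one_ne_zero)
  have : ∑ ω, μ ω * b < ∑ ω, μ ω * F ω :=
    Finset.sum_lt_sum (fun ω _ => mul_le_mul_of_nonneg_left (hF ω).le (hμ.1 ω))
      ⟨ω, Finset.mem_univ ω, mul_lt_mul_of_pos_left (hF ω) ((hμ.1 ω).lt_of_ne' hω)⟩
  rw [← Finset.sum_mul, hμ.2, one_mul] at this
  exact this.not_ge h

end Events

section Laws

variable {Ω A B : Type*} [Fintype Ω] [DecidableEq A] [DecidableEq B] {μ : Ω → ℝ}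

lemma lawOf_congr (μ : Ω → ℝ) {f : Ω → A} {g : Ω → B} {a : A} {b : B}
    (h : ∀ ω, f ω = a ↔ g ω = b) : lawOf μ f a = lawOf μ g b := by
  simp only [lawOf, h]

lemma lawOf_nonneg (hμ : 0 ≤ μ) (f : Ω → A) : 0 ≤ lawOf μ f := fun a =>
  Finset.sum_nonneg fun ω _ => by split_ifs; exacts [hμ ω, le_rfl]

lemma lawOf_apply_pos (hμ : 0 ≤ μ) (f : Ω → A) {ω : Ω} (hω : 0 < μ ω) :
    0 < lawOf μ f (f ω) :=
  Finset.sum_pos' (fun ω' _ => by split_ifs; exacts [hμ ω', le_rfl])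
    ⟨ω, Finset.mem_univ ω, by simpa using hω⟩

lemma exists_of_lawOf_ne_zero {f : Ω → A} {a : A} (ha : lawOf μ f a ≠ 0) :
    ∃ ω, μ ω ≠ 0 ∧ f ω = a := by
  obtain ⟨ω, -, hω⟩ := Finset.exists_ne_zero_of_sum_ne_zero ha
  exact ⟨ω, (ite_ne_right_iff.1 hω).symm⟩

lemma lawOf_pair_eq_zero (hμ : 0 ≤ μ) (f : Ω → A) (g : Ω → B) (a : A) {b : B}
    (hb : lawOf μ g b = 0) : lawOf μ (fun ω => (f ω, g ω)) (a, b) = 0 := by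
  by_contra h
  obtain ⟨ω, hω, hfg⟩ := exists_of_lawOf_ne_zero h
  obtain ⟨-, rfl⟩ := Prod.ext_iff.1 hfg
  exact (lawOf_apply_pos hμ g ((hμ ω).lt_of_ne' hω)).ne' hb

variable [Fintype A]

lemma sum_lawOf_mul (μ : Ω → ℝ) (f : Ω → A) (F : A → ℝ) :
    ∑ a, lawOf μ f a * F a = ∑ ω, μ ω * F (f ω) := by
  simp only [lawOf, Finset.sum_mul]
  rw [Finset.sum_comm]
  simp

lemma prob_lawOf (μ : Ω → ℝ) (f : Ω → A) (S : Set A) :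
    prob (lawOf μ f) S = prob μ (f ⁻¹' S) := by
  rw [← sum_mul_indicator_one, sum_lawOf_mul, ← sum_mul_indicator_one]
  rfl

lemma lawOf_mem_stdSimplex (hμ : μ ∈ stdSimplex ℝ Ω) (f : Ω → A) :
    lawOf μ f ∈ stdSimplex ℝ A :=
  ⟨lawOf_nonneg hμ.1 f, by simpa [hμ.2] using sum_lawOf_mul μ f 1⟩

end Laws

section RelativeEntropy

variable {Ω A B C : Type*} [Fintype Ω] [DecidableEq A] [DecidableEq B] [DecidableEq C] {μ : Ω → ℝ}

/-- The law of an independent pair with the same marginals as `(f, g)`. -/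
def indepLaw (μ : Ω → ℝ) (f : Ω → A) (g : Ω → B) : A × B → ℝ :=
  fun p => lawOf μ f p.1 * lawOf μ g p.2

/-- The law of a triple `(f', g', h)` in which `f'` and `g'` are conditionally independent given
`h`, with `(f', h)` and `(g', h)` distributed as `(f, h)` and `(g, h)`. Values of `h` of
probability zero get no mass, since `x / 0 = 0`. -/
def condIndepLaw (μ : Ω → ℝ) (f : Ω → A) (g : Ω → B) (h : Ω → C) : A × B × C → ℝ :=
  fun p => lawOf μ (fun ω => (f ω, h ω)) (p.1, p.2.2) *
    lawOf μ (fun ω => (g ω, h ω)) (p.2.1, p.2.2) / lawOf μ h p.2.2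

lemma indepLaw_nonneg (hμ : 0 ≤ μ) (f : Ω → A) (g : Ω → B) : 0 ≤ indepLaw μ f g := fun _ =>
  mul_nonneg (lawOf_nonneg hμ f _) (lawOf_nonneg hμ g _)

lemma condIndepLaw_nonneg (hμ : 0 ≤ μ) (f : Ω → A) (g : Ω → B) (h : Ω → C) :
    0 ≤ condIndepLaw μ f g h := fun _ =>
  div_nonneg (mul_nonneg (lawOf_nonneg hμ _ _) (lawOf_nonneg hμ _ _)) (lawOf_nonneg hμ h _)

lemma indepLaw_apply_pos (hμ : 0 ≤ μ) (f : Ω → A) (g : Ω → B) {ω : Ω} (hω : 0 < μ ω) :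
    0 < indepLaw μ f g (f ω, g ω) :=
  mul_pos (lawOf_apply_pos hμ f hω) (lawOf_apply_pos hμ g hω)

lemma condIndepLaw_apply_pos (hμ : 0 ≤ μ) (f : Ω → A) (g : Ω → B) (h : Ω → C) {ω : Ω}
    (hω : 0 < μ ω) : 0 < condIndepLaw μ f g h (f ω, g ω, h ω) :=
  div_pos (mul_pos (lawOf_apply_pos hμ (fun ω => (f ω, h ω)) hω)
    (lawOf_apply_pos hμ (fun ω => (g ω, h ω)) hω)) (lawOf_apply_pos hμ h hω)

variable [Fintype A] [Fintype B] [Fintype C]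

/-- The relative entropy `D(p ‖ q)` in bits. It is only meaningful when `q` vanishes nowhere on
the support of `p`, because of the junk values `x / 0 = 0` and `logb 2 0 = 0`. -/
def relEnt (p q : A → ℝ) : ℝ :=
  ∑ a, p a * Real.logb 2 (p a / q a)

lemma prob_indepLaw (μ : Ω → ℝ) (f : Ω → A) (g : Ω → B) (S : Set (A × B)) :
    prob (indepLaw μ f g) S =
      ∑ ω, μ ω * ∑ a, lawOf μ f a * S.indicator 1 (a, g ω) := by
  rw [← sum_lawOf_mul μ g fun b => ∑ a, lawOf μ f a * S.indicator 1 (a, b),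
    ← sum_mul_indicator_one, Fintype.sum_prod_type_right]
  simp only [indepLaw, mul_comm (lawOf μ f _), mul_assoc, Finset.mul_sum]

lemma prob_condIndepLaw (hμ : 0 ≤ μ) (f : Ω → A) (g : Ω → B) (h : Ω → C) {Q : C → A → ℝ}
    (hQ : ∀ a c, lawOf μ (fun ω => (f ω, h ω)) (a, c) = lawOf μ h c * Q c a)
    (S : Set (A × B × C)) :
    prob (condIndepLaw μ f g h) S =
      ∑ ω, μ ω * ∑ a, Q (h ω) a * S.indicator 1 (a, g ω, h ω) := by
  have key : ∀ a b c, condIndepLaw μ f g h (a, b, c) =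
      lawOf μ (fun ω => (g ω, h ω)) (b, c) * Q c a := fun a b c => by
    by_cases hc : lawOf μ h c = 0
    · simp [condIndepLaw, hc, lawOf_pair_eq_zero hμ g h b hc]
    · simp only [condIndepLaw, hQ]
      field_simp
  rw [← sum_mul_indicator_one, Fintype.sum_prod_type]
  simp only [key, mul_assoc]
  rw [Finset.sum_comm]
  simp only [← Finset.mul_sum]
  exact sum_lawOf_mul μ (fun ω => (g ω, h ω))
    fun p => ∑ a, Q p.2 a * S.indicator 1 (a, p)

lemma relEnt_lawOf (μ : Ω → ℝ) (f : Ω → A) (q : A → ℝ) :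
    relEnt (lawOf μ f) q = ∑ ω, μ ω * Real.logb 2 (lawOf μ f (f ω) / q (f ω)) :=
  sum_lawOf_mul μ f fun a => Real.logb 2 (lawOf μ f a / q a)

lemma entRV_eq_sum (μ : Ω → ℝ) (f : Ω → A) :
    entRV μ f = ∑ ω, μ ω * -Real.logb 2 (lawOf μ f (f ω)) := by
  simp only [entRV, ent, sum_lawOf_mul μ f fun a => Real.logb 2 (lawOf μ f a),
    mul_neg, Finset.sum_neg_distrib]

lemma miRV_eq_relEnt (hμ : 0 ≤ μ) (f : Ω → A) (g : Ω → B) :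
    miRV μ f g = relEnt (lawOf μ fun ω => (f ω, g ω)) (indepLaw μ f g) := by
  simp only [miRV, entRV_eq_sum, relEnt_lawOf, indepLaw, ← Finset.sum_add_distrib,
    ← Finset.sum_sub_distrib]
  refine Finset.sum_congr rfl fun ω _ => ?_
  rcases (hμ ω).eq_or_lt with h | h
  · simp [← h]
  · have hf := (lawOf_apply_pos hμ f h).ne'
    have hg := (lawOf_apply_pos hμ g h).ne'
    have hfg := (lawOf_apply_pos hμ (fun ω => (f ω, g ω)) h).ne'
    rw [Real.logb_div hfg (mul_ne_zero hf hg), Real.logb_mul hf hg]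
    ring

lemma cmiRV_eq_relEnt (hμ : 0 ≤ μ) (f : Ω → A) (g : Ω → B) (h : Ω → C) :
    cmiRV μ f g h =
      relEnt (lawOf μ fun ω => (f ω, g ω, h ω)) (condIndepLaw μ f g h) := by
  simp only [cmiRV, entRV_eq_sum, relEnt_lawOf, condIndepLaw, ← Finset.sum_add_distrib,
    ← Finset.sum_sub_distrib]
  refine Finset.sum_congr rfl fun ω _ => ?_
  rcases (hμ ω).eq_or_lt with h0 | h0
  · simp [← h0]
  · have hh := (lawOf_apply_pos hμ h h0).ne'
    have hfh := (lawOf_apply_pos hμ (fun ω => (f ω, h ω)) h0).ne'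
    have hgh := (lawOf_apply_pos hμ (fun ω => (g ω, h ω)) h0).ne'
    have hfgh := (lawOf_apply_pos hμ (fun ω => (f ω, g ω, h ω)) h0).ne'
    rw [Real.logb_div hfgh (div_ne_zero (mul_ne_zero hfh hgh) hh),
      Real.logb_div (mul_ne_zero hfh hgh) hh, Real.logb_mul hfh hgh]
    ring

end RelativeEntropy

end FiniteProbability

section ProductLaws

variable {ι A : Type*} [Fintype ι]

/-- The law of a family of independent variables with individual laws `p i`. -/
def piLaw (p : ι → A → ℝ) : (ι → A) → ℝ :=
  fun a => ∏ i, p i (a i)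

variable [DecidableEq ι] [Fintype A] {p : ι → A → ℝ}

lemma piLaw_mem_stdSimplex (hp : ∀ i, p i ∈ stdSimplex ℝ A) :
    piLaw p ∈ stdSimplex ℝ (ι → A) :=
  ⟨fun a => Finset.prod_nonneg fun i _ => (hp i).1 (a i), by
    simp only [piLaw, ← Fintype.prod_sum, (hp _).2, Finset.prod_const_one]⟩

lemma sum_piLaw_mul_split (p : ι → A → ℝ) (j : ι) (F : A → ({i // i ≠ j} → A) → ℝ) :
    ∑ c, piLaw p c * F (c j) (fun i => c i) =
      ∑ a, p j a * ∑ r, piLaw (fun i : {i // i ≠ j} => p i) r * F a r := by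
  rw [← Equiv.sum_comp (Equiv.funSplitAt j A).symm, Fintype.sum_prod_type]
  simp only [Finset.mul_sum]
  refine Finset.sum_congr rfl fun a _ => Finset.sum_congr rfl fun r _ => ?_
  have hr : ∀ i : {i // i ≠ j}, (Equiv.funSplitAt j A).symm (a, r) i = r i := fun i => by
    simp [i.2]
  have hj : (Equiv.funSplitAt j A).symm (a, r) j = a := by simp
  simp only [piLaw, Fintype.prod_eq_mul_prod_subtype_ne _ j, hj, hr, mul_assoc]

lemma sum_piLaw_mul_apply (hp : ∀ i, p i ∈ stdSimplex ℝ A) (j : ι) (F : A → ℝ) :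
    ∑ c, piLaw p c * F (c j) = ∑ a, p j a * F a := by
  rw [sum_piLaw_mul_split p j fun a _ => F a]
  simp only [← Finset.sum_mul, (piLaw_mem_stdSimplex fun i : {i // i ≠ j} => hp i).2, one_mul]

lemma sum_piLaw_mul_apply₂ (hp : ∀ i, p i ∈ stdSimplex ℝ A) {j k : ι} (hjk : j ≠ k)
    (F : A → A → ℝ) :
    ∑ c, piLaw p c * F (c j) (c k) = ∑ a, p j a * ∑ b, p k b * F a b := by
  rw [sum_piLaw_mul_split p j fun a r => F a (r ⟨k, hjk.symm⟩)]
  exact Finset.sum_congr rfl fun a _ => congrArg _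
    (sum_piLaw_mul_apply (fun i : {i // i ≠ j} => hp i) ⟨k, hjk.symm⟩ (F a))

lemma lawOf_piLaw {B : Type*} [DecidableEq B] (p : ι → A → ℝ) (f : ι → A → B) :
    lawOf (piLaw p) (fun a i => f i (a i)) = piLaw fun i => lawOf (p i) (f i) := by
  ext b
  simp only [lawOf, piLaw, Fintype.prod_sum, funext_iff]
  refine Finset.sum_congr rfl fun a _ => ?_
  simp [Finset.prod_ite_zero]

end ProductLaws

section LawOfLargeNumbers

open Filter Topology

variable {A : Type*} [Fintype A] {p : A → ℝ}

lemma sum_piLaw_mul_sq_sum {ι : Type*} [Fintype ι] [DecidableEq ι] (hp : p ∈ stdSimplex ℝ A)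
    {Z : A → ℝ} (hZ : ∑ a, p a * Z a = 0) :
    ∑ c, piLaw (fun _ : ι => p) c * (∑ i, Z (c i)) ^ 2 =
      Fintype.card ι * ∑ a, p a * Z a ^ 2 := by
  have cov : ∀ i j, ∑ c, piLaw (fun _ : ι => p) c * (Z (c i) * Z (c j)) =
      if i = j then ∑ a, p a * Z a ^ 2 else 0 := fun i j => by
    split_ifs with hij
    · simpa only [hij, ← sq] using sum_piLaw_mul_apply (fun _ => hp) j fun a => Z a ^ 2
    · rw [sum_piLaw_mul_apply₂ (fun _ => hp) hij fun a b => Z a * Z b]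
      simp only [mul_left_comm (p _), ← Finset.mul_sum, hZ, mul_zero, Finset.sum_const_zero]
  calc ∑ c, piLaw (fun _ : ι => p) c * (∑ i, Z (c i)) ^ 2
      = ∑ i, ∑ j, ∑ c, piLaw (fun _ : ι => p) c * (Z (c i) * Z (c j)) := by
        simp only [sq, Fintype.sum_mul_sum]
        simp only [Finset.mul_sum]
        rw [Finset.sum_comm]
        exact Finset.sum_congr rfl fun i _ => Finset.sum_comm
    _ = Fintype.card ι * ∑ a, p a * Z a ^ 2 := by simp [cov]

lemma tendsto_prob_piLaw_sum_lt (hp : p ∈ stdSimplex ℝ A) (Z : A → ℝ) {m : ℝ}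
    (hm : m < ∑ a, p a * Z a) :
    Tendsto (fun n : ℕ => prob (piLaw fun _ : Fin n => p) {c | ∑ i, Z (c i) < n * m})
      atTop (𝓝 0) := by
  set e := ∑ a, p a * Z a
  set σ := ∑ a, p a * (Z a - e) ^ 2
  have hcentered : ∑ a, p a * (Z a - e) = 0 := by
    simp [mul_sub, Finset.sum_sub_distrib, ← Finset.sum_mul, hp.2, e]
  have hpi (n : ℕ) : 0 ≤ piLaw fun _ : Fin n => p := (piLaw_mem_stdSimplex fun _ => hp).1
  have chebyshev : ∀ n : ℕ, 0 < n →
      prob (piLaw fun _ : Fin n => p) {c | ∑ i, Z (c i) < n * m} ≤ σ / (e - m) ^ 2 / n := by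
    intro n hn
    have hn' : (0 : ℝ) < n := mod_cast hn
    have hd : 0 < n * (e - m) := mul_pos hn' (sub_pos.2 hm)
    calc prob (piLaw fun _ : Fin n => p) {c | ∑ i, Z (c i) < n * m}
        ≤ ∑ c, piLaw (fun _ : Fin n => p) c *
            ((∑ i, (Z (c i) - e)) ^ 2 * ((n * (e - m)) ^ 2)⁻¹) := by
          refine prob_le_sum_mul (hpi n) (fun c => by positivity) fun c hc _ => ?_
          have hc : ∑ i, Z (c i) < n * m := hc
          rw [← div_eq_mul_inv, one_le_div (by positivity), ← neg_sq (∑ i, _)]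
          refine pow_le_pow_left₀ hd.le ?_ 2
          simp only [Finset.sum_sub_distrib, Finset.sum_const, Finset.card_univ,
            Fintype.card_fin, nsmul_eq_mul]
          linarith
      _ = n * σ * ((n * (e - m)) ^ 2)⁻¹ := by
          simp only [← mul_assoc, ← Finset.sum_mul]
          rw [sum_piLaw_mul_sq_sum hp hcentered, Fintype.card_fin]
      _ = σ / (e - m) ^ 2 / n := by
          have := (sub_pos.2 hm).ne'
          field_simp
  refine squeeze_zero' (.of_forall fun n => prob_nonneg (hpi n) _) ?_
    (tendsto_const_div_atTop_nhds_zero_nat (σ / (e - m) ^ 2))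
  filter_upwards [eventually_gt_atTop 0] using chebyshev

/-- The achievability half of Stein's lemma. -/
lemma exists_tests_piLaw (hp : p ∈ stdSimplex ℝ A) {q : A → ℝ} (hpq : ∀ a, 0 < p a → 0 < q a)
    {r : ℝ} (hr : r < relEnt p q) :
    ∃ T : ∀ n, Set (Fin n → A),
      Tendsto (fun n => prob (piLaw fun _ => p) (T n)ᶜ) atTop (𝓝 0) ∧
      ∀ n : ℕ, prob (piLaw fun _ => q) (T n) ≤ 2 ^ (-(n * r)) := by
  have hpi (n : ℕ) := piLaw_mem_stdSimplex fun _ : Fin n => hp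
  refine ⟨fun n => {a | (2 : ℝ) ^ (n * r) * piLaw (fun _ => q) a ≤ piLaw (fun _ => p) a},
    squeeze_zero (fun n => prob_nonneg (hpi n).1 _) (fun n => ?_)
      (tendsto_prob_piLaw_sum_lt hp (fun a => Real.logb 2 (p a / q a)) hr), fun n => ?_⟩
  · refine prob_mono (hpi n).1 fun a ha ha0 => ?_
    have hpa : ∀ i, 0 < p (a i) := fun i =>
      (hp.1 _).lt_of_ne' (Finset.prod_ne_zero_iff.1 ha0.ne' i (Finset.mem_univ i))
    have hqa : 0 < piLaw (fun _ => q) a := Finset.prod_pos fun i _ => hpq _ (hpa i)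
    have hratio : ∀ i, 0 < p (a i) / q (a i) := fun i => div_pos (hpa i) (hpq _ (hpa i))
    rw [Set.mem_ofPred_eq, ← Real.logb_prod _ _ fun i _ => (hratio i).ne',
      Real.logb_lt_iff_lt_rpow one_lt_two (Finset.prod_pos fun i _ => hratio i),
      Finset.prod_div_distrib]
    exact (div_lt_iff₀ hqa).2 (not_le.1 ha)
  · rw [Real.rpow_neg two_pos.le]
    exact prob_setOf_mul_le_le_inv (hpi n) _ (by positivity)

end LawOfLargeNumbers

section InformationTests

open Filter Topology

variable {Ω A B C : Type*} [Fintype Ω] [DecidableEq A] [DecidableEq B] [DecidableEq C] {μ : Ω → ℝ}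

lemma indepLaw_piLaw (μ : Ω → ℝ) (f : Ω → A) (g : Ω → B) (n : ℕ) :
    indepLaw (piLaw fun _ : Fin n => μ) (f ∘ ·) (g ∘ ·) ∘ Equiv.arrowProdEquivProdArrow _ _ _ =
      piLaw fun _ => indepLaw μ f g := by
  ext c
  refine (congrArg₂ (· * ·) (congrFun (lawOf_piLaw (fun _ => μ) fun _ => f) _)
    (congrFun (lawOf_piLaw (fun _ => μ) fun _ => g) _)).trans ?_
  exact Finset.prod_mul_distrib.symm

lemma lawOf_piLaw_pair (μ : Ω → ℝ) (f : Ω → A) (g : Ω → B) {n : ℕ} (a : Fin n → A)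
    (b : Fin n → B) :
    lawOf (piLaw fun _ => μ) (fun w => (f ∘ w, g ∘ w)) (a, b) =
      ∏ i, lawOf μ (fun ω => (f ω, g ω)) (a i, b i) := by
  refine Eq.trans (lawOf_congr _ fun w => ?_)
    (congrFun (lawOf_piLaw (fun _ => μ) fun _ ω => (f ω, g ω)) fun i => (a i, b i))
  simp only [Prod.ext_iff, funext_iff, Function.comp_apply, forall_and]

lemma condIndepLaw_piLaw (μ : Ω → ℝ) (f : Ω → A) (g : Ω → B) (h : Ω → C) (n : ℕ) :
    condIndepLaw (piLaw fun _ : Fin n => μ) (f ∘ ·) (g ∘ ·) (h ∘ ·) ∘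
        ((Equiv.arrowProdEquivProdArrow _ _ _).trans
          ((Equiv.refl _).prodCongr (Equiv.arrowProdEquivProdArrow _ _ _))) =
      piLaw fun _ => condIndepLaw μ f g h := by
  ext c
  refine (congrArg₂ (· / ·) (congrArg₂ (· * ·) (lawOf_piLaw_pair μ f h _ _)
    (lawOf_piLaw_pair μ g h _ _)) (congrFun (lawOf_piLaw (fun _ => μ) fun _ => h) _)).trans ?_
  simp only [piLaw, condIndepLaw, Finset.prod_mul_distrib, Finset.prod_div_distrib]
  rfl

variable [Fintype A] [Fintype B] [Fintype C]

lemma exists_tests_miRV (hμ : μ ∈ stdSimplex ℝ Ω) (f : Ω → A) (g : Ω → B) {r : ℝ}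
    (hr : r < miRV μ f g) :
    ∃ T : ∀ n, Set ((Fin n → A) × (Fin n → B)),
      Tendsto (fun n => prob (piLaw fun _ => μ) {w | (f ∘ w, g ∘ w) ∉ T n}) atTop (𝓝 0) ∧
      ∀ n : ℕ, prob (indepLaw (piLaw fun _ => μ) (f ∘ ·) (g ∘ ·)) (T n) ≤ 2 ^ (-(n * r)) := by
  have hpos : ∀ a, 0 < lawOf μ (fun ω => (f ω, g ω)) a → 0 < indepLaw μ f g a := fun a ha => by
    obtain ⟨ω, hω, rfl⟩ := exists_of_lawOf_ne_zero ha.ne'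
    exact indepLaw_apply_pos hμ.1 f g ((hμ.1 ω).lt_of_ne' hω)
  obtain ⟨T, hT, hT'⟩ := exists_tests_piLaw (lawOf_mem_stdSimplex hμ _) hpos
    (miRV_eq_relEnt hμ.1 f g ▸ hr)
  let e (n : ℕ) : (Fin n → A × B) ≃ (Fin n → A) × (Fin n → B) :=
    Equiv.arrowProdEquivProdArrow _ _ _
  refine ⟨fun n => (e n).symm ⁻¹' T n, ?_, fun n => ?_⟩
  · simp only [← lawOf_piLaw, prob_lawOf] at hT
    exact hT
  · rw [← prob_comp_equiv (e n), indepLaw_piLaw, Equiv.preimage_symm_preimage]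
    exact hT' n

lemma exists_tests_cmiRV (hμ : μ ∈ stdSimplex ℝ Ω) (f : Ω → A) (g : Ω → B) (h : Ω → C) {r : ℝ}
    (hr : r < cmiRV μ f g h) :
    ∃ T : ∀ n, Set ((Fin n → A) × (Fin n → B) × (Fin n → C)),
      Tendsto (fun n => prob (piLaw fun _ => μ) {w | (f ∘ w, g ∘ w, h ∘ w) ∉ T n})
        atTop (𝓝 0) ∧
      ∀ n : ℕ, prob (condIndepLaw (piLaw fun _ => μ) (f ∘ ·) (g ∘ ·) (h ∘ ·)) (T n) ≤
        2 ^ (-(n * r)) := by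
  have hpos : ∀ a, 0 < lawOf μ (fun ω => (f ω, g ω, h ω)) a → 0 < condIndepLaw μ f g h a :=
    fun a ha => by
      obtain ⟨ω, hω, rfl⟩ := exists_of_lawOf_ne_zero ha.ne'
      exact condIndepLaw_apply_pos hμ.1 f g h ((hμ.1 ω).lt_of_ne' hω)
  obtain ⟨T, hT, hT'⟩ := exists_tests_piLaw (lawOf_mem_stdSimplex hμ _) hpos
    (cmiRV_eq_relEnt hμ.1 f g h ▸ hr)
  let e (n : ℕ) : (Fin n → A × B × C) ≃ (Fin n → A) × (Fin n → B) × (Fin n → C) :=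
    (Equiv.arrowProdEquivProdArrow _ _ _).trans
      ((Equiv.refl _).prodCongr (Equiv.arrowProdEquivProdArrow _ _ _))
  refine ⟨fun n => (e n).symm ⁻¹' T n, ?_, fun n => ?_⟩
  · simp only [← lawOf_piLaw, prob_lawOf] at hT
    exact hT
  · rw [← prob_comp_equiv (e n), condIndepLaw_piLaw, Equiv.preimage_symm_preimage]
    exact hT' n

end InformationTests

section Disintegration

variable {Ω V X Y : Type*} [Fintype Ω] [Fintype X] [Fintype Y]
  [DecidableEq V] [DecidableEq X] [DecidableEq Y]
  {μ : Ω → ℝ} {fV : Ω → V} {fX : Ω → X} {fY : Ω → Y} {Q : V → X → ℝ} {K : V → X → Y → ℝ}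

/-- On the probability space `(Ω, μ)`, the conditional law of `fX` given `fV = v` is `Q v`, and
that of `fY` given `fV = v` and `fX = x` is `K v x`. -/
structure IsDisintegration (μ : Ω → ℝ) (fV : Ω → V) (fX : Ω → X) (fY : Ω → Y)
    (Q : V → X → ℝ) (K : V → X → Y → ℝ) : Prop where
  mem_stdSimplex : μ ∈ stdSimplex ℝ Ω
  fst_mem : ∀ v, Q v ∈ stdSimplex ℝ X
  snd_mem : ∀ v x, K v x ∈ stdSimplex ℝ Y
  lawOf_apply : ∀ v x y,
    lawOf μ (fun ω => (fV ω, fX ω, fY ω)) (v, x, y) = lawOf μ fV v * Q v x * K v x y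

namespace IsDisintegration

lemma lawOf_pair (h : IsDisintegration μ fV fX fY Q K) (x : X) (v : V) :
    lawOf μ (fun ω => (fX ω, fV ω)) (x, v) = lawOf μ fV v * Q v x := by
  calc lawOf μ (fun ω => (fX ω, fV ω)) (x, v)
      = ∑ y, lawOf μ (fun ω => (fV ω, fX ω, fY ω)) (v, x, y) := by
        simp only [lawOf, Prod.mk.injEq]
        rw [Finset.sum_comm]
        refine Finset.sum_congr rfl fun ω _ => ?_
        simp [ite_and, and_comm]
    _ = lawOf μ fV v * Q v x := by
        simp only [h.lawOf_apply, ← Finset.mul_sum, (h.snd_mem v x).2, mul_one]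

variable [Fintype V]

lemma sum_mul (h : IsDisintegration μ fV fX fY Q K) (F : V → X → Y → ℝ) :
    ∑ ω, μ ω * F (fV ω) (fX ω) (fY ω) =
      ∑ v, lawOf μ fV v * ∑ x, Q v x * ∑ y, K v x y * F v x y := by
  rw [← sum_lawOf_mul μ (fun ω => (fV ω, fX ω, fY ω)) fun p => F p.1 p.2.1 p.2.2]
  simp only [Fintype.sum_prod_type, h.lawOf_apply, mul_assoc, ← Finset.mul_sum]

end IsDisintegration

end Disintegration

section RandomCodebook

variable {ι₁ ι₂ V X : Type*} [Fintype ι₁] [Fintype ι₂] [Fintype V] [Fintype X]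
  [DecidableEq ι₁] [DecidableEq ι₂] {P : V → ℝ} {Q : V → X → ℝ}

/-- The law of one cloud of a random superposition code: a center `v` drawn from `P` and
satellites drawn independently from `Q v`, one for each element of `ι₁`. -/
def clusterLaw (P : V → ℝ) (Q : V → X → ℝ) : V × (ι₁ → X) → ℝ :=
  fun a => P a.1 * piLaw (fun _ => Q a.1) a.2

/-- The law of a random superposition codebook: independent clouds, one for each element of `ι₂`.
The codeword of the message pair `(l, k)` has center `(c k).1` and satellite `(c k).2 l`. -/
def codebookLaw (P : V → ℝ) (Q : V → X → ℝ) : (ι₂ → V × (ι₁ → X)) → ℝ :=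
  piLaw fun _ => clusterLaw P Q

lemma sum_clusterLaw_mul (P : V → ℝ) (Q : V → X → ℝ) (F : V → (ι₁ → X) → ℝ) :
    ∑ a, clusterLaw P Q a * F a.1 a.2 =
      ∑ v, P v * ∑ x, piLaw (fun _ : ι₁ => Q v) x * F v x := by
  simp only [Fintype.sum_prod_type, clusterLaw, mul_assoc, Finset.mul_sum]

lemma clusterLaw_mem_stdSimplex (hP : P ∈ stdSimplex ℝ V) (hQ : ∀ v, Q v ∈ stdSimplex ℝ X) :
    clusterLaw P Q ∈ stdSimplex ℝ (V × (ι₁ → X)) := by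
  have hpi v : piLaw (fun _ : ι₁ => Q v) ∈ stdSimplex ℝ (ι₁ → X) :=
    piLaw_mem_stdSimplex fun _ => hQ v
  refine ⟨fun a => mul_nonneg (hP.1 _) ((hpi _).1 _), ?_⟩
  simpa only [mul_one, (hpi _).2, hP.2] using sum_clusterLaw_mul (ι₁ := ι₁) P Q fun _ _ => 1

lemma codebookLaw_mem_stdSimplex (hP : P ∈ stdSimplex ℝ V) (hQ : ∀ v, Q v ∈ stdSimplex ℝ X) :
    codebookLaw P Q ∈ stdSimplex ℝ (ι₂ → V × (ι₁ → X)) :=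
  piLaw_mem_stdSimplex fun _ => clusterLaw_mem_stdSimplex hP hQ

lemma sum_codebookLaw_mul_codeword (hP : P ∈ stdSimplex ℝ V) (hQ : ∀ v, Q v ∈ stdSimplex ℝ X)
    (l : ι₁) (k : ι₂) (F : V → X → ℝ) :
    ∑ c, codebookLaw P Q c * F (c k).1 ((c k).2 l) = ∑ v, P v * ∑ x, Q v x * F v x := by
  calc ∑ c, codebookLaw P Q c * F (c k).1 ((c k).2 l)
      = ∑ a, clusterLaw P Q a * F a.1 (a.2 l) :=
        sum_piLaw_mul_apply (fun _ => clusterLaw_mem_stdSimplex hP hQ) k fun a => F a.1 (a.2 l)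
    _ = _ := by
        rw [sum_clusterLaw_mul P Q fun v x => F v (x l)]
        simp only [sum_piLaw_mul_apply (fun _ => hQ _) l]

lemma sum_codebookLaw_mul_center (hP : P ∈ stdSimplex ℝ V) (hQ : ∀ v, Q v ∈ stdSimplex ℝ X)
    (l : ι₁) {k k' : ι₂} (hk : k' ≠ k) (F : V → X → V → ℝ) :
    ∑ c, codebookLaw P Q c * F (c k).1 ((c k).2 l) (c k').1 =
      ∑ v, P v * ∑ x, Q v x * ∑ v', P v' * F v x v' := by
  have center (F : V → ℝ) : ∑ b, clusterLaw (ι₁ := ι₁) P Q b * F b.1 = ∑ v, P v * F v := by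
    rw [sum_clusterLaw_mul P Q fun v _ => F v]
    simp only [← Finset.sum_mul, (piLaw_mem_stdSimplex fun _ => hQ _).2, one_mul]
  calc ∑ c, codebookLaw P Q c * F (c k).1 ((c k).2 l) (c k').1
      = ∑ a, clusterLaw P Q a * ∑ b, clusterLaw P Q b * F a.1 (a.2 l) b.1 :=
        sum_piLaw_mul_apply₂ (fun _ => clusterLaw_mem_stdSimplex hP hQ) hk.symm
          fun a b => F a.1 (a.2 l) b.1
    _ = ∑ a, clusterLaw P Q a * ∑ v', P v' * F a.1 (a.2 l) v' :=
        Finset.sum_congr rfl fun a _ => congrArg _ (center _)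
    _ = _ := by
        rw [sum_clusterLaw_mul P Q fun v x => ∑ v', P v' * F v (x l) v']
        exact Finset.sum_congr rfl fun v _ => congrArg _
          (sum_piLaw_mul_apply (fun _ => hQ v) l fun x => ∑ v', P v' * F v x v')

lemma sum_codebookLaw_mul_satellite (hP : P ∈ stdSimplex ℝ V) (hQ : ∀ v, Q v ∈ stdSimplex ℝ X)
    {l l' : ι₁} (hl : l' ≠ l) (k : ι₂) (F : V → X → X → ℝ) :
    ∑ c, codebookLaw P Q c * F (c k).1 ((c k).2 l) ((c k).2 l') =
      ∑ v, P v * ∑ x, Q v x * ∑ x', Q v x' * F v x x' := by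
  calc ∑ c, codebookLaw P Q c * F (c k).1 ((c k).2 l) ((c k).2 l')
      = ∑ a, clusterLaw P Q a * F a.1 (a.2 l) (a.2 l') :=
        sum_piLaw_mul_apply (fun _ => clusterLaw_mem_stdSimplex hP hQ) k
          fun a => F a.1 (a.2 l) (a.2 l')
    _ = _ := by
        rw [sum_clusterLaw_mul P Q fun v x => F v (x l) (x l')]
        simp only [sum_piLaw_mul_apply₂ (fun _ => hQ _) hl.symm]

namespace IsDisintegration

variable {Ω Y : Type*} [Fintype Ω] [Fintype Y] [DecidableEq V] [DecidableEq X] [DecidableEq Y]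
  {μ : Ω → ℝ} {fV : Ω → V} {fX : Ω → X} {fY : Ω → Y} {K : V → X → Y → ℝ}

lemma sum_codebookLaw_mul (h : IsDisintegration μ fV fX fY Q K) (l : ι₁) (k : ι₂)
    (F : V → X → Y → ℝ) :
    ∑ c, codebookLaw (lawOf μ fV) Q c *
        ∑ y, K (c k).1 ((c k).2 l) y * F (c k).1 ((c k).2 l) y =
      ∑ ω, μ ω * F (fV ω) (fX ω) (fY ω) := by
  rw [sum_codebookLaw_mul_codeword (lawOf_mem_stdSimplex h.mem_stdSimplex fV) h.fst_mem l k
    fun v x => ∑ y, K v x y * F v x y, h.sum_mul]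

lemma sum_codebookLaw_mul_of_center_ne (h : IsDisintegration μ fV fX fY Q K) (l : ι₁) {k k' : ι₂}
    (hk : k' ≠ k) (F : V → X → Y → V → ℝ) :
    ∑ c, codebookLaw (lawOf μ fV) Q c *
        ∑ y, K (c k).1 ((c k).2 l) y * F (c k).1 ((c k).2 l) y (c k').1 =
      ∑ ω, μ ω * ∑ v, lawOf μ fV v * F (fV ω) (fX ω) (fY ω) v := by
  rw [sum_codebookLaw_mul_center (lawOf_mem_stdSimplex h.mem_stdSimplex fV) h.fst_mem l hk
    fun v x v' => ∑ y, K v x y * F v x y v',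
    h.sum_mul fun v x y => ∑ v', lawOf μ fV v' * F v x y v']
  simp only [Finset.mul_sum, mul_left_comm (K _ _ _)]
  simp only [Finset.sum_comm (γ := V) (α := Y)]

lemma sum_codebookLaw_mul_of_satellite_ne (h : IsDisintegration μ fV fX fY Q K) {l l' : ι₁}
    (hl : l' ≠ l) (k : ι₂) (F : V → X → Y → X → ℝ) :
    ∑ c, codebookLaw (lawOf μ fV) Q c *
        ∑ y, K (c k).1 ((c k).2 l) y * F (c k).1 ((c k).2 l) y ((c k).2 l') =
      ∑ ω, μ ω * ∑ x, Q (fV ω) x * F (fV ω) (fX ω) (fY ω) x := by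
  rw [sum_codebookLaw_mul_satellite (lawOf_mem_stdSimplex h.mem_stdSimplex fV) h.fst_mem hl k
    fun v x x' => ∑ y, K v x y * F v x y x',
    h.sum_mul fun v x y => ∑ x', Q v x' * F v x y x']
  simp only [Finset.mul_sum, mul_left_comm (K _ _ _)]
  simp only [Finset.sum_comm (γ := X) (α := Y)]

end IsDisintegration

end RandomCodebook

section Decoding

lemma exists_decoder {Y ι : Type*} [Nonempty ι] (T : Y → ι → Prop) :
    ∃ g : Y → ι, ∀ y i, g y ≠ i → T y i → ∃ j ≠ i, T y j := by
  suffices h : ∀ y, ∃ j, ∀ i, j ≠ i → T y i → ∃ j ≠ i, T y j from ⟨_, fun y => (h y).choose_spec⟩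
  intro y
  by_cases h : ∃ j, T y j
  · obtain ⟨j, hj⟩ := h
    exact ⟨j, fun i hji _ => ⟨j, hji, hj⟩⟩
  · exact ⟨Classical.arbitrary ι, fun i _ hi => (h ⟨i, hi⟩).elim⟩

variable {ι₁ ι₂ V X Y₁ Y₂ : Type*} [Fintype ι₁] [Fintype ι₂] [DecidableEq ι₁] [DecidableEq ι₂]

lemma one_le_sum_indicator {ι α : Type*} {s : Finset ι} {f : ι → α} {S : Set α} {i : ι}
    (hi : i ∈ s) (hS : f i ∈ S) : (1 : ℝ) ≤ ∑ i ∈ s, S.indicator 1 (f i) := by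
  refine le_trans ?_ (Finset.single_le_sum (f := fun i => S.indicator (1 : α → ℝ) (f i))
    (fun i _ => indicator_one_nonneg S (f i)) hi)
  simp [hS]

/-- Receiver 1 looks for a message pair whose center passes the test `A` and whose satellite
passes the test `S`. -/
lemma exists_satellite_decoder [Nonempty ι₁] [Nonempty ι₂] (c : ι₂ → V × (ι₁ → X))
    (A : Set (V × Y₁)) (S : Set (X × Y₁ × V)) :
    ∃ g : Y₁ → ι₁, ∀ y l k, (if g y = l then 0 else 1 : ℝ) ≤
      Aᶜ.indicator 1 ((c k).1, y) + Sᶜ.indicator 1 ((c k).2 l, y, (c k).1) +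
        ∑ k' ∈ Finset.univ.erase k, A.indicator 1 ((c k').1, y) +
        ∑ l' ∈ Finset.univ.erase l, S.indicator 1 ((c k).2 l', y, (c k).1) := by
  obtain ⟨g, hg⟩ := exists_decoder fun (y : Y₁) (i : ι₁ × ι₂) =>
    ((c i.2).1, y) ∈ A ∧ ((c i.2).2 i.1, y, (c i.2).1) ∈ S
  refine ⟨fun y => (g y).1, fun y l k => ?_⟩
  have hA₀ := indicator_one_nonneg Aᶜ ((c k).1, y)
  have hS₀ := indicator_one_nonneg Sᶜ ((c k).2 l, y, (c k).1)
  have hA : 0 ≤ ∑ k' ∈ Finset.univ.erase k, A.indicator (1 : V × Y₁ → ℝ) ((c k').1, y) :=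
    Finset.sum_nonneg fun _ _ => indicator_one_nonneg _ _
  have hS : 0 ≤ ∑ l' ∈ Finset.univ.erase l,
      S.indicator (1 : X × Y₁ × V → ℝ) ((c k).2 l', y, (c k).1) :=
    Finset.sum_nonneg fun _ _ => indicator_one_nonneg _ _
  split_ifs with hgl
  · positivity
  by_cases hkA : ((c k).1, y) ∈ A
  swap; · rw [Set.indicator_of_mem hkA, Pi.one_apply]; linarith
  by_cases hlS : ((c k).2 l, y, (c k).1) ∈ S
  swap; · rw [Set.indicator_of_mem (s := Sᶜ) hlS, Pi.one_apply]; linarith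
  obtain ⟨⟨l', k'⟩, hne, hk'A, hl'S⟩ := hg y (l, k) (ne_of_apply_ne _ hgl) ⟨hkA, hlS⟩
  by_cases hk : k' = k
  · subst hk
    have hl : l' ≠ l := fun h => hne (Prod.ext h rfl)
    linarith [one_le_sum_indicator (f := fun l' => ((c k').2 l', y, (c k').1))
      (Finset.mem_erase.2 ⟨hl, Finset.mem_univ l'⟩) hl'S]
  · linarith [one_le_sum_indicator (f := fun k' => ((c k').1, y))
      (Finset.mem_erase.2 ⟨hk, Finset.mem_univ k'⟩) hk'A]

lemma exists_center_decoder [Nonempty ι₂] (v : ι₂ → V) (B : Set (V × Y₂)) :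
    ∃ g : Y₂ → ι₂, ∀ y k, (if g y = k then 0 else 1 : ℝ) ≤
      Bᶜ.indicator 1 (v k, y) + ∑ k' ∈ Finset.univ.erase k, B.indicator 1 (v k', y) := by
  obtain ⟨g, hg⟩ := exists_decoder fun (y : Y₂) (k : ι₂) => (v k, y) ∈ B
  refine ⟨g, fun y k => ?_⟩
  have hB₀ := indicator_one_nonneg Bᶜ (v k, y)
  have hB : 0 ≤ ∑ k' ∈ Finset.univ.erase k, B.indicator (1 : V × Y₂ → ℝ) (v k', y) :=
    Finset.sum_nonneg fun _ _ => indicator_one_nonneg _ _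
  split_ifs with hgk
  · positivity
  by_cases hkB : (v k, y) ∈ B
  · obtain ⟨k', hk, hk'B⟩ := hg y k hgk hkB
    linarith [one_le_sum_indicator (f := fun k' => (v k', y))
      (Finset.mem_erase.2 ⟨hk, Finset.mem_univ k'⟩) hk'B]
  · rw [Set.indicator_of_mem (s := Bᶜ) hkB, Pi.one_apply]
    linarith

end Decoding

section OneShotCoding

variable {ι₁ ι₂ Ω V X Y₁ Y₂ : Type*} [Fintype ι₁] [Fintype ι₂] [DecidableEq ι₁] [DecidableEq ι₂]
  [Fintype Y₁] [Fintype Y₂]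

/-- The sum of the error probabilities of the two receivers, averaged over uniform independent
messages, when the codebook `c` is used with the decoders `g₁`, `g₂` over the channel `K` from
the center and satellite to the two outputs. -/
def sumError (K : V → X → Y₁ × Y₂ → ℝ) (c : ι₂ → V × (ι₁ → X)) (g₁ : Y₁ → ι₁)
    (g₂ : Y₂ → ι₂) : ℝ :=
  (Fintype.card ι₁ * Fintype.card ι₂ : ℝ)⁻¹ * ∑ l, ∑ k, ∑ y, K (c k).1 ((c k).2 l) y *
    ((if g₁ y.1 = l then 0 else 1) + if g₂ y.2 = k then 0 else 1)

/-- The union bound for the sum of the error probabilities when the message pair `(l, k)` is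
sent: the tests `A`, `S` (receiver 1) and `B` (receiver 2) may fail on the transmitted codewords
or succeed on other ones. -/
def unionBound (K : V → X → Y₁ × Y₂ → ℝ) (A : Set (V × Y₁)) (S : Set (X × Y₁ × V))
    (B : Set (V × Y₂)) (c : ι₂ → V × (ι₁ → X)) (l : ι₁) (k : ι₂) : ℝ :=
  ∑ y, K (c k).1 ((c k).2 l) y *
      (Aᶜ.indicator 1 ((c k).1, y.1) + Sᶜ.indicator 1 ((c k).2 l, y.1, (c k).1) +
        Bᶜ.indicator 1 ((c k).1, y.2)) +
    ∑ k' ∈ Finset.univ.erase k, ∑ y, K (c k).1 ((c k).2 l) y *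
      (A.indicator 1 ((c k').1, y.1) + B.indicator 1 ((c k').1, y.2)) +
    ∑ l' ∈ Finset.univ.erase l, ∑ y, K (c k).1 ((c k).2 l) y *
      S.indicator 1 ((c k).2 l', y.1, (c k).1)

lemma exists_decoders_sumError_le [Nonempty ι₁] [Nonempty ι₂] {K : V → X → Y₁ × Y₂ → ℝ}
    (hK : ∀ v x, 0 ≤ K v x) (A : Set (V × Y₁)) (S : Set (X × Y₁ × V)) (B : Set (V × Y₂))
    (c : ι₂ → V × (ι₁ → X)) :
    ∃ g₁ g₂, sumError K c g₁ g₂ ≤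
      (Fintype.card ι₁ * Fintype.card ι₂ : ℝ)⁻¹ * ∑ l, ∑ k, unionBound K A S B c l k := by
  obtain ⟨g₁, hg₁⟩ := exists_satellite_decoder c A S
  obtain ⟨g₂, hg₂⟩ := exists_center_decoder (fun k => (c k).1) B
  refine ⟨g₁, g₂, mul_le_mul_of_nonneg_left ?_ (by positivity)⟩
  refine Finset.sum_le_sum fun l _ => Finset.sum_le_sum fun k _ => ?_
  rw [unionBound, Finset.sum_comm, Finset.sum_comm (s := Finset.univ.erase l)]
  simp only [← Finset.sum_add_distrib, ← Finset.mul_sum, ← mul_add]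
  refine Finset.sum_le_sum fun y _ => mul_le_mul_of_nonneg_left ?_ (hK _ _ y)
  rw [Finset.sum_add_distrib]
  linarith [hg₁ y.1 l k, hg₂ y.2 k]

variable [Fintype Ω] [Fintype V] [Fintype X] [DecidableEq V] [DecidableEq X] [DecidableEq Y₁]
  [DecidableEq Y₂] {μ : Ω → ℝ} {fV : Ω → V} {fX : Ω → X} {f₁ : Ω → Y₁} {f₂ : Ω → Y₂}
  {Q : V → X → ℝ} {K : V → X → Y₁ × Y₂ → ℝ}

namespace IsDisintegration

lemma sum_codebookLaw_mul_unionBound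
    (h : IsDisintegration μ fV fX (fun ω => (f₁ ω, f₂ ω)) Q K)
    (A : Set (V × Y₁)) (S : Set (X × Y₁ × V)) (B : Set (V × Y₂)) (l : ι₁) (k : ι₂) :
    ∑ c, codebookLaw (lawOf μ fV) Q c * unionBound K A S B c l k =
      prob μ {ω | (fV ω, f₁ ω) ∉ A} + prob μ {ω | (fX ω, f₁ ω, fV ω) ∉ S} +
          prob μ {ω | (fV ω, f₂ ω) ∉ B} +
        (Fintype.card ι₂ - 1 : ℕ) *
          (prob (indepLaw μ fV f₁) A + prob (indepLaw μ fV f₂) B) +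
        (Fintype.card ι₁ - 1 : ℕ) * prob (condIndepLaw μ fX f₁ fV) S := by
  have own := h.sum_codebookLaw_mul l k fun v x y => Aᶜ.indicator 1 (v, y.1) +
    Sᶜ.indicator 1 (x, y.1, v) + Bᶜ.indicator 1 (v, y.2)
  have center : ∀ k' ∈ Finset.univ.erase k, _ := fun k' hk' =>
    h.sum_codebookLaw_mul_of_center_ne l (Finset.ne_of_mem_erase hk')
      fun _ _ y v' => A.indicator 1 (v', y.1) + B.indicator 1 (v', y.2)
  have satellite : ∀ l' ∈ Finset.univ.erase l, _ := fun l' hl' =>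
    h.sum_codebookLaw_mul_of_satellite_ne (Finset.ne_of_mem_erase hl') k
      fun v _ y x' => S.indicator 1 (x', y.1, v)
  simp only [unionBound, mul_add (codebookLaw _ _ _), Finset.sum_add_distrib,
    Finset.mul_sum (Finset.univ.erase _)]
  rw [own, Finset.sum_comm (t := Finset.univ.erase k), Finset.sum_congr rfl center,
    Finset.sum_comm (t := Finset.univ.erase l), Finset.sum_congr rfl satellite]
  simp only [Finset.sum_const, Finset.card_erase_of_mem (Finset.mem_univ _), Finset.card_univ,
    nsmul_eq_mul, mul_add, Finset.sum_add_distrib, prob_indepLaw,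
    prob_condIndepLaw h.mem_stdSimplex.1 fX f₁ fV h.lawOf_pair, ← sum_mul_indicator_one μ]
  rfl

/-- Some codebook does at least as well as the random one. -/
lemma exists_sumError_le [Nonempty ι₁] [Nonempty ι₂]
    (h : IsDisintegration μ fV fX (fun ω => (f₁ ω, f₂ ω)) Q K)
    (A : Set (V × Y₁)) (S : Set (X × Y₁ × V)) (B : Set (V × Y₂)) :
    ∃ (c : ι₂ → V × (ι₁ → X)) (g₁ : Y₁ → ι₁) (g₂ : Y₂ → ι₂), sumError K c g₁ g₂ ≤
      prob μ {ω | (fV ω, f₁ ω) ∉ A} + prob μ {ω | (fX ω, f₁ ω, fV ω) ∉ S} +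
          prob μ {ω | (fV ω, f₂ ω) ∉ B} +
        (Fintype.card ι₂ - 1 : ℕ) *
          (prob (indepLaw μ fV f₁) A + prob (indepLaw μ fV f₂) B) +
        (Fintype.card ι₁ - 1 : ℕ) * prob (condIndepLaw μ fX f₁ fV) S := by
  obtain ⟨c, hc⟩ := exists_le_of_sum_mul_le
    (F := fun c => (Fintype.card ι₁ * Fintype.card ι₂ : ℝ)⁻¹ *
      ∑ l, ∑ k, unionBound K A S B c l k)
    (codebookLaw_mem_stdSimplex (ι₁ := ι₁) (ι₂ := ι₂)
      (lawOf_mem_stdSimplex h.mem_stdSimplex fV) h.fst_mem) le_rfl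
  obtain ⟨g₁, g₂, hg⟩ := exists_decoders_sumError_le (fun v x => (h.snd_mem v x).1) A S B c
  refine ⟨c, g₁, g₂, (hg.trans hc).trans_eq ?_⟩
  calc ∑ c, codebookLaw (lawOf μ fV) Q c * ((Fintype.card ι₁ * Fintype.card ι₂ : ℝ)⁻¹ *
          ∑ l, ∑ k, unionBound K A S B c l k)
      = (Fintype.card ι₁ * Fintype.card ι₂ : ℝ)⁻¹ *
          ∑ l : ι₁, ∑ k : ι₂, ∑ c, codebookLaw (lawOf μ fV) Q c * unionBound K A S B c l k := by
        simp only [mul_left_comm (codebookLaw _ _ _), ← Finset.mul_sum]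
        congr 1
        simp only [Finset.mul_sum (Finset.univ : Finset ι₁),
          Finset.mul_sum (Finset.univ : Finset ι₂)]
        exact Finset.sum_comm.trans (Finset.sum_congr rfl fun l _ => Finset.sum_comm)
    _ = _ := by
        simp only [h.sum_codebookLaw_mul_unionBound, Finset.sum_const, Finset.card_univ,
          nsmul_eq_mul]
        field_simp

end IsDisintegration

end OneShotCoding

section BlockCoding

open Filter Topology

lemma tendsto_ceil_sub_one_mul {b : ℕ → ℝ} {R r : ℝ} (hR : R < r) (hb₀ : ∀ n, 0 ≤ b n)
    (hb : ∀ n : ℕ, b n ≤ 2 ^ (-(n * r))) :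
    Tendsto (fun n : ℕ => ((⌈(2 : ℝ) ^ (n * R)⌉₊ - 1 : ℕ) : ℝ) * b n) atTop (𝓝 0) := by
  have hpow : Tendsto (fun n : ℕ => ((2 : ℝ) ^ (R - r)) ^ n) atTop (𝓝 0) :=
    tendsto_pow_atTop_nhds_zero_of_lt_one (by positivity)
      (Real.rpow_lt_one_of_one_lt_of_neg one_lt_two (sub_neg.2 hR))
  refine squeeze_zero (fun n => mul_nonneg (Nat.cast_nonneg _) (hb₀ n)) (fun n => ?_) hpow
  have hpos : (0 : ℝ) < 2 ^ (n * R) := by positivity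
  calc ((⌈(2 : ℝ) ^ (n * R)⌉₊ - 1 : ℕ) : ℝ) * b n
      ≤ 2 ^ (n * R) * 2 ^ (-(n * r)) := by
        refine mul_le_mul ?_ (hb n) (hb₀ n) hpos.le
        rw [Nat.cast_pred (Nat.ceil_pos.2 hpos), sub_le_iff_le_add]
        exact (Nat.ceil_lt_add_one hpos.le).le
    _ = ((2 : ℝ) ^ (R - r)) ^ n := by
        rw [← Real.rpow_add two_pos, ← Real.rpow_mul_natCast two_pos.le]
        ring_nf

lemma le_logb_ceil_div {n : ℕ} (hn : 0 < n) (R : ℝ) :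
    R ≤ Real.logb 2 ⌈(2 : ℝ) ^ (n * R)⌉₊ / n := by
  rw [le_div_iff₀' (by exact_mod_cast hn), Real.le_logb_iff_rpow_le one_lt_two]
  · exact Nat.le_ceil _
  · exact_mod_cast Nat.ceil_pos.2 (by positivity)

/-- The memoryless extension of the two-output channel `K` to blocks of length `n`. -/
def blockKernel {V X Y₁ Y₂ : Type*} (K : V → X → Y₁ × Y₂ → ℝ) {n : ℕ} (v : Fin n → V)
    (x : Fin n → X) : (Fin n → Y₁) × (Fin n → Y₂) → ℝ :=
  fun y => ∏ i, K (v i) (x i) (y.1 i, y.2 i)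

variable {Ω V X Y₁ Y₂ : Type*} [Fintype Ω] [Fintype Y₁] [Fintype Y₂]
  {μ : Ω → ℝ} {fV : Ω → V} {fX : Ω → X} {f₁ : Ω → Y₁} {f₂ : Ω → Y₂}
  {Q : V → X → ℝ} {K : V → X → Y₁ × Y₂ → ℝ}

lemma blockKernel_mem_stdSimplex (hK : ∀ v x, K v x ∈ stdSimplex ℝ (Y₁ × Y₂)) {n : ℕ}
    (v : Fin n → V) (x : Fin n → X) :
    blockKernel K v x ∈ stdSimplex ℝ ((Fin n → Y₁) × (Fin n → Y₂)) := by
  refine ⟨fun y => Finset.prod_nonneg fun i _ => (hK _ _).1 _, ?_⟩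
  rw [← Equiv.sum_comp (Equiv.arrowProdEquivProdArrow _ _ _)]
  exact (piLaw_mem_stdSimplex fun i => hK (v i) (x i)).2

variable [Fintype X] [DecidableEq V] [DecidableEq X] [DecidableEq Y₁] [DecidableEq Y₂]

namespace IsDisintegration

lemma pi (h : IsDisintegration μ fV fX (fun ω => (f₁ ω, f₂ ω)) Q K) (n : ℕ) :
    IsDisintegration (piLaw fun _ : Fin n => μ) (fV ∘ ·) (fX ∘ ·)
      (fun w => (f₁ ∘ w, f₂ ∘ w)) (fun v => piLaw fun i => Q (v i)) (blockKernel K) where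
  mem_stdSimplex := piLaw_mem_stdSimplex fun _ => h.mem_stdSimplex
  fst_mem v := piLaw_mem_stdSimplex fun i => h.fst_mem (v i)
  snd_mem := blockKernel_mem_stdSimplex h.snd_mem
  lawOf_apply v x y := by
    calc lawOf (piLaw fun _ => μ) (fun w => (fV ∘ w, fX ∘ w, f₁ ∘ w, f₂ ∘ w)) (v, x, y)
        = lawOf (piLaw fun _ => μ) (fun w i => (fV (w i), fX (w i), f₁ (w i), f₂ (w i)))
            fun i => (v i, x i, y.1 i, y.2 i) :=
          lawOf_congr _ fun w => by
            simp only [Prod.ext_iff, funext_iff, Function.comp_apply, forall_and]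
      _ = ∏ i, lawOf μ fV (v i) * Q (v i) (x i) * K (v i) (x i) (y.1 i, y.2 i) := by
          rw [lawOf_piLaw (fun _ => μ) fun _ ω => (fV ω, fX ω, f₁ ω, f₂ ω)]
          simp only [piLaw, h.lawOf_apply]
      _ = _ := by
          rw [Finset.prod_mul_distrib, Finset.prod_mul_distrib]
          exact congrArg (· * _ * _) (congrFun (lawOf_piLaw (fun _ => μ) fun _ => fV) v).symm

variable [Fintype V]

theorem eventually_exists_sumError_lt
    (h : IsDisintegration μ fV fX (fun ω => (f₁ ω, f₂ ω)) Q K) {R₁ R₂ ε : ℝ}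
    (hR₁ : R₁ < cmiRV μ fX f₁ fV) (hR₂ : R₂ < miRV μ fV f₁) (hR₂' : R₂ < miRV μ fV f₂)
    (hε : 0 < ε) :
    ∀ᶠ n : ℕ in atTop, ∃ (c : Fin ⌈(2 : ℝ) ^ (n * R₂)⌉₊ →
        (Fin n → V) × (Fin ⌈(2 : ℝ) ^ (n * R₁)⌉₊ → Fin n → X)) (g₁ : (Fin n → Y₁) → Fin _)
      (g₂ : (Fin n → Y₂) → Fin _), sumError (blockKernel K) c g₁ g₂ < ε := by
  obtain ⟨r₁, hr₁, hr₁'⟩ := exists_between hR₁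
  obtain ⟨r₂, hr₂, hr₂'⟩ := exists_between hR₂
  obtain ⟨r₃, hr₃, hr₃'⟩ := exists_between hR₂'
  obtain ⟨S, hS, hS'⟩ := exists_tests_cmiRV h.mem_stdSimplex fX f₁ fV hr₁'
  obtain ⟨A, hA, hA'⟩ := exists_tests_miRV h.mem_stdSimplex fV f₁ hr₂'
  obtain ⟨B, hB, hB'⟩ := exists_tests_miRV h.mem_stdSimplex fV f₂ hr₃'
  have hμ (n : ℕ) := ((h.pi n).mem_stdSimplex).1
  have hlim := ((hA.add hS).add hB).add
    (((tendsto_ceil_sub_one_mul hr₂ (fun n => prob_nonneg (indepLaw_nonneg (hμ n) _ _) _) hA').add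
      (tendsto_ceil_sub_one_mul hr₃ (fun n => prob_nonneg (indepLaw_nonneg (hμ n) _ _) _) hB')).add
      (tendsto_ceil_sub_one_mul hr₁ (fun n => prob_nonneg (condIndepLaw_nonneg (hμ n) _ _ _) _)
        hS'))
  simp only [add_zero] at hlim
  filter_upwards [hlim.eventually_lt_const hε] with n hn
  have (R : ℝ) : Nonempty (Fin ⌈(2 : ℝ) ^ (n * R)⌉₊) :=
    Fin.pos_iff_nonempty.1 (Nat.ceil_pos.2 (by positivity))
  obtain ⟨c, g₁, g₂, hc⟩ := (h.pi n).exists_sumError_le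
    (ι₁ := Fin ⌈(2 : ℝ) ^ (n * R₁)⌉₊) (ι₂ := Fin ⌈(2 : ℝ) ^ (n * R₂)⌉₊) (A n) (S n) (B n)
  refine ⟨c, g₁, g₂, hc.trans_lt ?_⟩
  simp only [Fintype.card_fin]
  linarith

end IsDisintegration

end BlockCoding

section InterferenceChannel

lemma exists_condLaw {V X : Type*} [Fintype V] [Fintype X] {p : V → X → ℝ}
    (hp : ∀ v x, 0 ≤ p v x) (hsum : ∑ v, ∑ x, p v x = 1) :
    ∃ Q : V → X → ℝ, (∀ v, Q v ∈ stdSimplex ℝ X) ∧ ∀ v x, p v x = (∑ x', p v x') * Q v x := by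
  classical
  obtain ⟨v, -, hv⟩ := Finset.exists_ne_zero_of_sum_ne_zero (hsum.trans_ne one_ne_zero)
  obtain ⟨x₀, -, -⟩ := Finset.exists_ne_zero_of_sum_ne_zero hv
  suffices h : ∀ v, ∃ q ∈ stdSimplex ℝ X, ∀ x, p v x = (∑ x', p v x') * q x by
    choose Q hQ hpQ using h
    exact ⟨Q, hQ, hpQ⟩
  intro v
  by_cases hv : ∑ x, p v x = 0
  · refine ⟨Pi.single x₀ 1, single_mem_stdSimplex ℝ x₀, fun x => ?_⟩
    rw [hv, zero_mul]
    exact (Finset.sum_eq_zero_iff_of_nonneg fun x _ => hp v x).1 hv x (Finset.mem_univ x)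
  · refine ⟨fun x => p v x / ∑ x', p v x', ⟨fun x => ?_, ?_⟩, fun x => ?_⟩
    · exact div_nonneg (hp v x) (Finset.sum_nonneg fun x' _ => hp v x')
    · rw [← Finset.sum_div, div_self hv]
    · rw [mul_div_cancel₀ _ hv]

section Channel

variable {𝒳₁ 𝒳₂ 𝒴₁ 𝒴₂ : Type} [Fintype 𝒳₁] [Fintype 𝒳₂] [Fintype 𝒴₁] [Fintype 𝒴₂]

lemma pe1_nonneg (ch : DMIFC 𝒳₁ 𝒳₂ 𝒴₁ 𝒴₂) {n M1 M2 : ℕ} (f1 : Fin M1 → Fin M2 → Fin n → 𝒳₁)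
    (f2 : Fin M2 → Fin n → 𝒳₂) (g1 : (Fin n → 𝒴₁) → Fin M1) : 0 ≤ pe1 ch n M1 M2 f1 f2 g1 := by
  refine mul_nonneg (by positivity) (Finset.sum_nonneg fun w1 _ => Finset.sum_nonneg fun w2 _ =>
    Finset.sum_nonneg fun y1 _ => Finset.sum_nonneg fun y2 _ => ?_)
  exact mul_nonneg (Finset.prod_nonneg fun i _ => ch.nonneg _ _ _ _) (by positivity)

lemma pe2_nonneg (ch : DMIFC 𝒳₁ 𝒳₂ 𝒴₁ 𝒴₂) {n M1 M2 : ℕ} (f1 : Fin M1 → Fin M2 → Fin n → 𝒳₁)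
    (f2 : Fin M2 → Fin n → 𝒳₂) (g2 : (Fin n → 𝒴₂) → Fin M2) : 0 ≤ pe2 ch n M1 M2 f1 f2 g2 := by
  refine mul_nonneg (by positivity) (Finset.sum_nonneg fun w1 _ => Finset.sum_nonneg fun w2 _ =>
    Finset.sum_nonneg fun y1 _ => Finset.sum_nonneg fun y2 _ => ?_)
  exact mul_nonneg (Finset.prod_nonneg fun i _ => ch.nonneg _ _ _ _) (by positivity)

/-- The channel as a kernel from the center `(u, x₂)` and the satellite `x₁` of superposition
coding to the outputs: the auxiliary letter `u` does not enter the channel. -/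
def superpositionKernel {U : Type*} (ch : DMIFC 𝒳₁ 𝒳₂ 𝒴₁ 𝒴₂) (v : U × 𝒳₂) (x : 𝒳₁) :
    𝒴₁ × 𝒴₂ → ℝ :=
  fun y => ch.W x v.2 y.1 y.2

lemma superpositionKernel_mem_stdSimplex {U : Type*} (ch : DMIFC 𝒳₁ 𝒳₂ 𝒴₁ 𝒴₂) (v : U × 𝒳₂)
    (x : 𝒳₁) : superpositionKernel ch v x ∈ stdSimplex ℝ (𝒴₁ × 𝒴₂) :=
  ⟨fun _ => ch.nonneg _ _ _ _, (Fintype.sum_prod_type _).trans (ch.sum_one x v.2)⟩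

lemma pe1_add_pe2_eq_sumError {U : Type*} (ch : DMIFC 𝒳₁ 𝒳₂ 𝒴₁ 𝒴₂) {n M1 M2 : ℕ}
    (c : Fin M2 → (Fin n → U × 𝒳₂) × (Fin M1 → Fin n → 𝒳₁)) (g1 : (Fin n → 𝒴₁) → Fin M1)
    (g2 : (Fin n → 𝒴₂) → Fin M2) :
    pe1 ch n M1 M2 (fun w1 w2 => (c w2).2 w1) (fun w2 i => ((c w2).1 i).2) g1 +
        pe2 ch n M1 M2 (fun w1 w2 => (c w2).2 w1) (fun w2 i => ((c w2).1 i).2) g2 =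
      sumError (blockKernel (superpositionKernel ch)) c g1 g2 := by
  simp only [pe1, pe2, sumError, blockKernel, superpositionKernel, Fintype.sum_prod_type,
    Fintype.card_fin, one_div, mul_add, Finset.sum_add_distrib]

lemma jointMarkov_mem_stdSimplex (ch : DMIFC 𝒳₁ 𝒳₂ 𝒴₁ 𝒴₂) {nU : ℕ} {q : Fin nU × 𝒳₁ × 𝒳₂ → ℝ}
    (hq : q ∈ stdSimplex ℝ (Fin nU × 𝒳₁ × 𝒳₂)) :
    jointMarkov ch nU q ∈ stdSimplex ℝ (Fin nU × 𝒳₁ × 𝒳₂ × 𝒴₁ × 𝒴₂) := by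
  refine ⟨fun p => mul_nonneg (hq.1 _) (ch.nonneg _ _ _ _), ?_⟩
  simpa only [jointMarkov, Fintype.sum_prod_type, ← Finset.mul_sum, ch.sum_one, mul_one]
    using hq.2

lemma jointStar_eq_jointMarkov (ch : DMIFC 𝒳₁ 𝒳₂ 𝒴₁ 𝒴₂) {nU : ℕ} (pUX2 : Fin nU → 𝒳₂ → ℝ)
    (pX1 : Fin nU → 𝒳₁ → ℝ) :
    jointStar ch nU pUX2 pX1 = jointMarkov ch nU fun p => pUX2 p.1 p.2.2 * pX1 p.1 p.2.1 :=
  rfl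

lemma lawOf_jointMarkov [DecidableEq 𝒳₂] (ch : DMIFC 𝒳₁ 𝒳₂ 𝒴₁ 𝒴₂) {nU : ℕ}
    (q : Fin nU × 𝒳₁ × 𝒳₂ → ℝ) (v : Fin nU × 𝒳₂) :
    lawOf (jointMarkov ch nU q) (fun p => (p.1, p.2.2.1)) v = ∑ x, q (v.1, x, v.2) := by
  obtain ⟨u, x2⟩ := v
  simp only [lawOf, jointMarkov, Fintype.sum_prod_type, ← ite_zero_mul, ← Finset.mul_sum,
    ch.sum_one, mul_one, Prod.mk.injEq, ite_and]
  simp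

end Channel

lemma exists_isDisintegration_jointMarkov (ch : DMIFC X1 X2 Y1 Y2) {nU : ℕ}
    {q : Fin nU × X1 × X2 → ℝ} (hq : q ∈ stdSimplex ℝ (Fin nU × X1 × X2)) :
    ∃ Q, IsDisintegration (jointMarkov ch nU q) (fun p => (p.1, p.2.2.1)) (fun p => p.2.1)
      (fun p => (p.2.2.2.1, p.2.2.2.2)) Q (superpositionKernel ch) := by
  obtain ⟨Q, hQ, hqQ⟩ := exists_condLaw (p := fun (v : Fin nU × X2) x => q (v.1, x, v.2))
    (fun _ _ => hq.1 _) (by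
      rw [← hq.2]
      simp only [Fintype.sum_prod_type]
      exact Finset.sum_congr rfl fun u _ => Finset.sum_comm)
  refine ⟨Q, jointMarkov_mem_stdSimplex ch hq, hQ, superpositionKernel_mem_stdSimplex ch, ?_⟩
  rintro ⟨u, x2⟩ x1 ⟨y1, y2⟩
  rw [lawOf_jointMarkov, ← hqQ]
  have hiff (p : Fin nU × X1 × X2 × Y1 × Y2) :
      ((p.1, p.2.2.1), p.2.1, (p.2.2.2.1, p.2.2.2.2)) = ((u, x2), x1, (y1, y2)) ↔
        p = (u, x1, x2, y1, y2) := by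
    grind
  simp only [lawOf, hiff, Finset.sum_ite_eq', Finset.mem_univ, if_true]
  rfl

/-- The region of superposition coding when both receivers decode the cloud center `(U, X₂)`:
the pairs with `R₁ ≤ I(X₁; Y₁ | U, X₂)`, `R₂ ≤ I(U, X₂; Y₁)` and `R₂ ≤ I(U, X₂; Y₂)` for some
finite-valued `U` such that `U → (X₁, X₂) → (Y₁, Y₂)` is a Markov chain. -/
def superpositionRegion (ch : DMIFC X1 X2 Y1 Y2) : Set (ℝ × ℝ) :=
  {R | ∃ (nU : ℕ) (q : Fin nU × X1 × X2 → ℝ), q ∈ stdSimplex ℝ (Fin nU × X1 × X2) ∧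
    R.1 ≤ cmiRV (jointMarkov ch nU q)
      (fun p => p.2.1) (fun p => p.2.2.2.1) (fun p => (p.1, p.2.2.1)) ∧
    R.2 ≤ miRV (jointMarkov ch nU q) (fun p => (p.1, p.2.2.1)) (fun p => p.2.2.2.1) ∧
    R.2 ≤ miRV (jointMarkov ch nU q) (fun p => (p.1, p.2.2.1)) (fun p => p.2.2.2.2)}

theorem superpositionRegion_subset_capacityT1 (ch : DMIFC X1 X2 Y1 Y2) :
    superpositionRegion ch ⊆ CapacityT1 ch := by
  rintro ⟨R₁, R₂⟩ ⟨nU, q, hq, hR₁, hR₂, hR₂'⟩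
  refine subset_closure fun ε hε => ?_
  obtain ⟨Q, hQ⟩ := exists_isDisintegration_jointMarkov ch hq
  have hcode := hQ.eventually_exists_sumError_lt ((sub_lt_self _ hε).trans_le hR₁)
    ((sub_lt_self _ hε).trans_le hR₂) ((sub_lt_self _ hε).trans_le hR₂') hε
  obtain ⟨n, ⟨c, g1, g2, herr⟩, hn⟩ := (hcode.and (Filter.eventually_gt_atTop 0)).exists
  have hcard (R : ℝ) : 0 < ⌈(2 : ℝ) ^ (n * R)⌉₊ := Nat.ceil_pos.2 (by positivity)
  rw [← pe1_add_pe2_eq_sumError] at herr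
  refine ⟨n, _, _, fun w1 w2 => (c w2).2 w1, fun w2 i => ((c w2).1 i).2, g1, g2, hn, hcard _,
    hcard _, le_logb_ceil_div hn _, le_logb_ceil_div hn _, ?_, ?_⟩
  · linarith [pe2_nonneg ch (fun w1 w2 => (c w2).2 w1) (fun w2 i => ((c w2).1 i).2) g2]
  · linarith [pe1_nonneg ch (fun w1 w2 => (c w2).2 w1) (fun w2 i => ((c w2).1 i).2) g1]

lemma Rstar_subset_superpositionRegion (ch : DMIFC X1 X2 Y1 Y2) (hB : TypeB ch) :
    Rstar ch ⊆ superpositionRegion ch := by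
  rintro R ⟨nU, pUX2, pX1, hU, hUsum, hX, hXsum, hR₁, hR₂⟩
  have hq : (fun p => pUX2 p.1 p.2.2 * pX1 p.1 p.2.1) ∈ stdSimplex ℝ (Fin nU × X1 × X2) := by
    refine ⟨fun p => mul_nonneg (hU _ _) (hX _ _), ?_⟩
    simp only [Fintype.sum_prod_type, ← Finset.sum_mul, ← Finset.mul_sum, hXsum, mul_one, hUsum]
  rw [jointStar_eq_jointMarkov] at hR₁ hR₂
  exact ⟨nU, _, hq, hR₁, hR₂.trans (hB nU _ hq.1 hq.2), hR₂⟩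

end InterferenceChannel

/-- **Theorem 3 (achievability for type B weak interference).**  For every two-user
discrete memoryless interference channel with degraded message sets (transmitter 1
informed) with type B weak interference, the region `ℛ_*` is achievable:
`ℛ_* ⊆ C^{T₁}_{IFC}`. -/
theorem Rstar_subset_capacityT1_of_typeB (ch : DMIFC X1 X2 Y1 Y2) (hB : TypeB ch) :
    Rstar ch ⊆ CapacityT1 ch :=
  (Rstar_subset_superpositionRegion ch hB).trans (superpositionRegion_subset_capacityT1 ch)
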